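/- For any feasible eviction strategy Q (and any run of Q), there exists an eviction graph H_Q of that run together with a coloring of its edges satisfying: (1) any two edges of the same color have the same source vertex; (2) for any two edges (i,j) and (i,j') of the same color, the evictions of pages σ(j) and σ(j') do not overlap; (3) the total number of colors used is at most OPT. Moreover, OBJ_Q ≤ OPT + |E|, where E is the set of edges of H_Q. -/

import Mathlib

namespace Caching

attribute [local instance low] Classical.propDecidable

/-- A run of a feasible eviction strategy on the request sequence `σ` with cache size `k`
and time horizon `T`.  `C t` is the cache after processing request `t` (with `C 0 = ∅`),
and `p t` is the page evicted at time `t` (meaningful at full-cache misses). -/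
structure CacheRun (S : Type) [DecidableEq S] (k T : ℕ) (σ : ℕ → S) where
  C : ℕ → Finset S
  p : ℕ → S
  init : C 0 = ∅
  card_le : ∀ t, (C t).card ≤ k
  hit : ∀ t, 1 ≤ t → t ≤ T → (σ t ∈ C (t - 1) ∨ (C (t - 1)).card < k) →
      C t = insert (σ t) (C (t - 1))
  evict_mem : ∀ t, 1 ≤ t → t ≤ T → σ t ∉ C (t - 1) → (C (t - 1)).card = k →
      p t ∈ C (t - 1)
  evict : ∀ t, 1 ≤ t → t ≤ T → σ t ∉ C (t - 1) → (C (t - 1)).card = k →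
      C t = insert (σ t) ((C (t - 1)).erase (p t))

variable {S : Type} [DecidableEq S]

/- `nextReq σ T t` is `ν(t)`: the first time `s > t` (with `s ≤ T`) at which the page
`σ t` is requested again, and `T + 1` if there is no such time. -/
open Classical in
noncomputable def nextReq (σ : ℕ → S) (T t : ℕ) : ℕ :=
  if h : ∃ s, t < s ∧ s ≤ T ∧ σ s = σ t then Nat.find h else T + 1

/-- The total prediction loss `η = Σ_{t=1}^T |ν(t) - ω(t)|`. -/
noncomputable def totalLoss (σ : ℕ → S) (T : ℕ) (ω : ℕ → ℕ) : ℕ :=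
  ∑ t ∈ Finset.Icc 1 T, Nat.dist (nextReq σ T t) (ω t)

/-- `I_Q(t)`: indices of the last requests (up to time `t`) of the currently cached pages. -/
noncomputable def lastIdx {k T : ℕ} {σ : ℕ → S} (R : CacheRun S k T σ) (t : ℕ) : Finset ℕ :=
  (Finset.Icc 1 t).filter fun i => σ i ∈ R.C t ∧ ∀ j ∈ Finset.Icc (i + 1) t, σ j ≠ σ i

/-- Time `t` is a full-cache miss (an eviction step). -/
def EvictStep {k T : ℕ} {σ : ℕ → S} (R : CacheRun S k T σ) (t : ℕ) : Prop :=
  1 ≤ t ∧ t ≤ T ∧ σ t ∉ R.C (t - 1) ∧ (R.C (t - 1)).card = k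

/-- At time `t` the run evicts the page whose last-request index is `i`. -/
def EvictsIdx {k T : ℕ} {σ : ℕ → S} (R : CacheRun S k T σ) (t i : ℕ) : Prop :=
  EvictStep R t ∧ i ∈ lastIdx R (t - 1) ∧ R.p t = σ i

/-- `OBJ_Q`: the number of cache misses of the run. -/
noncomputable def misses {k T : ℕ} {σ : ℕ → S} (R : CacheRun S k T σ) : ℕ :=
  ((Finset.Icc 1 T).filter fun t => σ t ∉ R.C (t - 1)).card

/-- Belady's algorithm: on a full-cache miss always evict the cached page with the
largest next-request time. -/
def IsBelady {k T : ℕ} {σ : ℕ → S} (A : CacheRun S k T σ) : Prop :=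
  ∀ t, EvictStep A t → ∀ i ∈ lastIdx A (t - 1), A.p t = σ i →
    ∀ j ∈ lastIdx A (t - 1), nextReq σ T j ≤ nextReq σ T i

/-- BlindOracle: on a full-cache miss always evict the cached page with the largest
predicted next-request time. -/
def IsBlindOracle {k T : ℕ} {σ : ℕ → S} (B : CacheRun S k T σ) (ω : ℕ → ℕ) : Prop :=
  ∀ t, EvictStep B t → ∀ i ∈ lastIdx B (t - 1), B.p t = σ i →
    ∀ j ∈ lastIdx B (t - 1), ω j ≤ ω i

/-- An eviction graph of a run: a directed graph on `{1,…,T}` whose every edge `(i, j)`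
corresponds to a distinct time (`time e`) at which the run made a mistake by evicting
page `σ j` while `i` was a strictly better eviction candidate in the cache. -/
structure EvictionGraph {k T : ℕ} {σ : ℕ → S} (R : CacheRun S k T σ) where
  E : Finset (ℕ × ℕ)
  time : ℕ × ℕ → ℕ
  time_inj : ∀ e ∈ E, ∀ e' ∈ E, time e = time e' → e = e'
  mistake : ∀ e ∈ E, EvictsIdx R (time e) e.2 ∧ e.1 ∈ lastIdx R (time e - 1) ∧
      nextReq σ T e.2 < nextReq σ T e.1

/-- The eviction at time `t` triggers the eviction at time `t'`: the page evicted
at `t` is next requested at `t' = ν(i)`, which is again an eviction step. -/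
def Triggers {k T : ℕ} {σ : ℕ → S} (R : CacheRun S k T σ) (t t' : ℕ) : Prop :=
  ∃ i, EvictsIdx R t i ∧ t' = nextReq σ T i ∧ ∃ j, EvictsIdx R t' j

/-- The eviction of the page with last-request index `i` triggers the eviction of the
page with last-request index `j` (at time `ν(i)`). -/
def TriggersIdx {k T : ℕ} {σ : ℕ → S} (R : CacheRun S k T σ) (i j : ℕ) : Prop :=
  (∃ t, EvictsIdx R t i) ∧ EvictsIdx R (nextReq σ T i) j

/-- The page requested at time `t` was never requested before. -/
def NewPage (σ : ℕ → S) (t : ℕ) : Prop := ∀ s, 1 ≤ s → s < t → σ s ≠ σ t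

/-- At time `t` the evicted page has the largest prediction among cached pages. -/
def BlindChoiceAt {k T : ℕ} {σ : ℕ → S} (R : CacheRun S k T σ) (ω : ℕ → ℕ) (t : ℕ) : Prop :=
  ∀ i ∈ lastIdx R (t - 1), R.p t = σ i → ∀ j ∈ lastIdx R (t - 1), ω j ≤ ω i

/-- Corrector's choice at time `t`: if some cached page has a provably wrong prediction
(`ω i < t`), evict such a page with minimal prediction; otherwise act as BlindOracle. -/
def CorrectorChoiceAt {k T : ℕ} {σ : ℕ → S} (R : CacheRun S k T σ) (ω : ℕ → ℕ) (t : ℕ) :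
    Prop :=
  ((∃ i ∈ lastIdx R (t - 1), ω i < t) →
    ∀ i ∈ lastIdx R (t - 1), R.p t = σ i →
      ω i < t ∧ ∀ j ∈ lastIdx R (t - 1), ω j < t → ω i ≤ ω j) ∧
  ((¬ ∃ i ∈ lastIdx R (t - 1), ω i < t) → BlindChoiceAt R ω t)

/-- The page requested at time `t` was last evicted (before `t`) at a step labeled with
strategy `s₀` (0 = BlindOracle, 1 = RandomAlg, 2 = Corrector). -/
def LastEvictedWith {k T : ℕ} {σ : ℕ → S} (R : CacheRun S k T σ) (strat : ℕ → Fin 3)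
    (t : ℕ) (s₀ : Fin 3) : Prop :=
  ∃ t₀, t₀ < t ∧ EvictStep R t₀ ∧ R.p t₀ = σ t ∧ strat t₀ = s₀ ∧
    ∀ t₁, t₀ < t₁ → t₁ < t → ¬(EvictStep R t₁ ∧ R.p t₁ = σ t)

/-- A run of the AlternatingOracle strategy (for a fixed realization of its random
choices), together with the labeling `strat` of which of the three strategies was used
at each eviction step: on a miss for a never-requested page use BlindOracle; if the
requested page was last evicted by BlindOracle use RandomAlg (an arbitrary cached page);
if by RandomAlg use Corrector; if by Corrector use BlindOracle. -/
def IsAlternatingOracle {k T : ℕ} {σ : ℕ → S} (R : CacheRun S k T σ) (ω : ℕ → ℕ)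
    (strat : ℕ → Fin 3) : Prop :=
  ∀ t, EvictStep R t →
    (NewPage σ t → strat t = 0 ∧ BlindChoiceAt R ω t) ∧
    (LastEvictedWith R strat t 0 → strat t = 1) ∧
    (LastEvictedWith R strat t 1 → strat t = 2 ∧ CorrectorChoiceAt R ω t) ∧
    (LastEvictedWith R strat t 2 → strat t = 0 ∧ BlindChoiceAt R ω t)

/-- AlternatingOracle driven by a seed `u` of uniform random values: at each eviction
step performed by RandomAlg at time `t`, the evicted page is the one whose last-request
index has rank `u t` among the `k` cached indices, so that for a uniformly random seed
the evicted page is uniform over the cache. -/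
def IsAlternatingOracleSeeded {k T : ℕ} {σ : ℕ → S} (R : CacheRun S k T σ) (ω : ℕ → ℕ)
    (strat : ℕ → Fin 3) (u : Fin (T + 1) → Fin k) : Prop :=
  IsAlternatingOracle R ω strat ∧
  ∀ t (h : EvictStep R t), strat t = 1 →
    ∀ i ∈ lastIdx R (t - 1), R.p t = σ i →
      ((lastIdx R (t - 1)).filter fun j => j < i).card =
        ((u ⟨t, Nat.lt_succ_of_le h.2.1⟩ : Fin k) : ℕ)

/-- The family of runs is adapted to the seeds: the behavior up to time `t` depends only
on the seed values with index at most `t` (the strategy is online). -/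
def Adapted {k T : ℕ} {σ : ℕ → S} (R : (Fin (T + 1) → Fin k) → CacheRun S k T σ)
    (strat : (Fin (T + 1) → Fin k) → ℕ → Fin 3) : Prop :=
  ∀ u u' t, (∀ s : Fin (T + 1), (s : ℕ) ≤ t → u s = u' s) →
    (R u).C t = (R u').C t ∧ (R u).p t = (R u').p t ∧ strat u t = strat u' t

/-- The probability of the outcome `x` for `T` i.i.d. Bernoulli(γ) random bits. -/
noncomputable def bernWeight (γ : ℝ) {T : ℕ} (x : Fin T → Bool) : ℝ :=
  ∏ i, if x i then γ else 1 - γ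

/-- `S(x, m)`: the number of ones among the first `m` coordinates of `x`. -/
noncomputable def scount {T : ℕ} (x : Fin T → Bool) (m : ℕ) : ℕ :=
  (Finset.univ.filter fun i : Fin T => (i : ℕ) < m ∧ x i).card

/-! Let `R` be a run of `Q` and let `A` be a run to compare it with.  Keep a bijection `π` from the
cache of `R` to the cache of `A` that fixes their common pages.  When `R` evicts `y` and `A`
evicts `a`, the page `b = π⁻¹ a` is rematched to `π y`.  Call a page `p` inverted if `ν(π p) <
ν(p)`.  If `R` misses while `A` hits, then `a` is the requested page, so `b` was inverted and the
number of inverted pages drops by one, unless `b` is inverted again after the rematching.  This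
new inversion takes the place of one at `y`, unless `ν(y) ≤ ν(π y) < ν(b)`; in that case evicting
`y` instead of `b` was a mistake, recorded as the edge `b → y`.  The number of inverted pages is
thus a potential that shows `OBJ_R ≤ OBJ_A + |E|`.

Color the edge `b → y` by the miss of `A` at which `b` became a page of the cache of `R` outside
the cache of `A`.  As long as `b` keeps this status it is not requested, so edges of one color
have the same source, and `ν(π b)`, which is at least `ν(y)` after the edge is created, does not
decrease.  The next edge of that color arises at a hit of `A` on `π b`, hence not before time
`ν(y)`, when the request of `y` has triggered an eviction. -/

section Rematch

variable {π : Equiv.Perm S} {P Q : Finset S} {x y a p : S}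

/-- `π` restricts to a bijection from `P` onto `Q` that fixes every common element.  Taking `π` to
be a permutation of the whole page set makes its inverse available for free; its values outside
`P` are irrelevant. -/
structure IsMatching (π : Equiv.Perm S) (P Q : Finset S) : Prop where
  apply_mem_iff : ∀ p, π p ∈ Q ↔ p ∈ P
  apply_eq_self : ∀ p ∈ P, p ∈ Q → π p = p

/-- The matching obtained from `π` when `x` replaces `y` on the left and `a` on the right: the
partner `π⁻¹ a` of `a` is rematched to the partner `π y` of `y`, and `x` is matched to itself. -/
def rematch (π : Equiv.Perm S) (x y a : S) : Equiv.Perm S :=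
  Equiv.swap x ((Equiv.swap a (π y) * π) x) * (Equiv.swap a (π y) * π)

theorem rematch_apply_self : rematch π x y a x = x := by
  simp [rematch]

theorem IsMatching.swap_mul_apply_mem_erase_iff (h : IsMatching π P Q) (hya : y ∈ P ↔ a ∈ Q) :
    (Equiv.swap a (π y) * π) p ∈ Q.erase a ↔ p ∈ P.erase y := by
  have hp := h.apply_mem_iff p
  have hy := h.apply_mem_iff y
  have hpy : π p = π y ↔ p = y := π.apply_eq_iff_eq
  simp only [Equiv.Perm.mul_apply, Equiv.swap_apply_def, Finset.mem_erase]
  grind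

theorem IsMatching.rematch_apply (h : IsMatching π P Q) (hya : y ∈ P ↔ a ∈ Q)
    (hxP : x ∈ P → y = x) (hxQ : x ∈ Q → a = x) (hp : p ∈ P.erase y) :
    rematch π x y a p = if p = π.symm a then π y else π p := by
  have hmem := (h.swap_mul_apply_mem_erase_iff hya).2 hp
  have hne : (Equiv.swap a (π y) * π) p ≠ x := by grind
  have hne' : (Equiv.swap a (π y) * π) p ≠ (Equiv.swap a (π y) * π) x := by
    rw [Ne, Equiv.apply_eq_iff_eq]; grind
  have hpy : π p ≠ π y := by rw [Ne, Equiv.apply_eq_iff_eq]; grind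
  rw [rematch, Equiv.Perm.mul_apply, Equiv.swap_apply_of_ne_of_ne hne hne',
    Equiv.Perm.mul_apply, Equiv.swap_apply_def, if_neg hpy]
  simp only [Equiv.eq_symm_apply]

theorem IsMatching.rematch (h : IsMatching π P Q) (hya : y ∈ P ↔ a ∈ Q)
    (hxP : x ∈ P → y = x) (hxQ : x ∈ Q → a = x) :
    IsMatching (rematch π x y a) (insert x (P.erase y)) (insert x (Q.erase a)) where
  apply_mem_iff p := by
    have hp := h.swap_mul_apply_mem_erase_iff (p := p) hya
    have hx := h.swap_mul_apply_mem_erase_iff (p := x) hya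
    have hpx : (Equiv.swap a (π y) * π) p = (Equiv.swap a (π y) * π) x ↔ p = x :=
      Equiv.apply_eq_iff_eq _
    rw [Caching.rematch, Equiv.Perm.mul_apply, Equiv.swap_apply_def]
    grind
  apply_eq_self p hp hpQ := by
    by_cases hpx : p = x
    · rw [hpx, rematch_apply_self]
    · have hpP : p ∈ P.erase y := Finset.mem_of_mem_insert_of_ne hp hpx
      have hpQ' : p ∈ Q.erase a := Finset.mem_of_mem_insert_of_ne hpQ hpx
      have hfix := h.apply_eq_self p (Finset.mem_of_mem_erase hpP) (Finset.mem_of_mem_erase hpQ')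
      have hne : p ≠ π.symm a := by
        rw [Ne, Equiv.eq_symm_apply, hfix]
        exact Finset.ne_of_mem_erase hpQ'
      rw [h.rematch_apply hya hxP hxQ hpP, if_neg hne, hfix]

end Rematch

section NextUse

variable {α : Type*} {σ : ℕ → α} {T t u : ℕ} {p : α}

/-- The first time after `t` at which page `p` is requested, and `T + 1` if there is none up to
time `T`.  For a page last requested at time `i ≤ t` this is `ν(i)`. -/
noncomputable def nextUse (σ : ℕ → α) (T t : ℕ) (p : α) : ℕ :=
  sInf {u | t < u ∧ (u ≤ T → σ u = p)}

theorem nextUse_mem (σ : ℕ → α) (T t : ℕ) (p : α) :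
    nextUse σ T t p ∈ {u | t < u ∧ (u ≤ T → σ u = p)} :=
  Nat.sInf_mem ⟨max t T + 1, by grind⟩

theorem lt_nextUse (σ : ℕ → α) (T t : ℕ) (p : α) : t < nextUse σ T t p :=
  (nextUse_mem σ T t p).1

theorem nextUse_le (htu : t < u) (hu : u ≤ T → σ u = p) : nextUse σ T t p ≤ u :=
  Nat.sInf_le ⟨htu, hu⟩

theorem nextUse_request_succ (σ : ℕ → α) (T t : ℕ) : nextUse σ T t (σ (t + 1)) = t + 1 :=
  le_antisymm (nextUse_le t.lt_succ_self fun _ => rfl) (lt_nextUse σ T t _)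

theorem nextUse_succ_of_ne (ht : t < T) (h : p ≠ σ (t + 1)) :
    nextUse σ T (t + 1) p = nextUse σ T t p := by
  unfold nextUse
  congr 1
  ext u
  grind

theorem succ_lt_nextUse_of_ne (ht : t < T) (h : p ≠ σ (t + 1)) : t + 1 < nextUse σ T t p :=
  nextUse_succ_of_ne ht h ▸ lt_nextUse σ T (t + 1) p

end NextUse

section Requests

variable {T : ℕ} {σ : ℕ → S} {t i : ℕ} {p : S}

/-- The time of the last request of page `p` up to time `t`.  The value is junk if `p` has not been
requested by then. -/
def lastReq (σ : ℕ → S) (t : ℕ) (p : S) : ℕ :=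
  Nat.findGreatest (fun i => σ i = p) t

theorem lastReq_succ_of_ne (h : p ≠ σ (t + 1)) : lastReq σ (t + 1) p = lastReq σ t p :=
  Nat.findGreatest_of_not h.symm

theorem nextReq_eq_nextUse (hit : i ≤ t) (htT : t ≤ T)
    (hi : ∀ j ∈ Finset.Icc (i + 1) t, σ j ≠ σ i) : nextReq σ T i = nextUse σ T t (σ i) := by
  obtain ⟨hlt, hreq⟩ := nextUse_mem σ T t (σ i)
  unfold nextReq
  split_ifs with h
  · obtain ⟨hif, hfT, hf⟩ := Nat.find_spec h
    refine le_antisymm ?_ (nextUse_le ?_ fun _ => hf)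
    · by_cases hle : nextUse σ T t (σ i) ≤ T
      · exact Nat.find_min' h ⟨hit.trans_lt hlt, hle, hreq hle⟩
      · exact hfT.trans (Nat.le_of_not_le hle)
    · by_contra hft
      exact hi _ (Finset.mem_Icc.2 ⟨hif, not_lt.1 hft⟩) hf
  · refine le_antisymm ?_ (nextUse_le (by lia) fun hle => absurd hle (by lia))
    by_contra hle
    exact h ⟨_, hit.trans_lt hlt, by lia, hreq (by lia)⟩

end Requests

section Run

variable {k T : ℕ} {σ : ℕ → S} {R : CacheRun S k T σ} {t u i : ℕ} {p : S}

theorem evictStep_succ_iff :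
    EvictStep R (t + 1) ↔ t < T ∧ σ (t + 1) ∉ R.C t ∧ (R.C t).card = k := by
  simp [EvictStep]

/-- The page that makes room for the request at time `t + 1`.  When no eviction takes place it is
the requested page itself, so that every step has the form `insert (σ (t + 1)) (C.erase _)`. -/
noncomputable def CacheRun.victim (R : CacheRun S k T σ) (t : ℕ) : S :=
  if EvictStep R (t + 1) then R.p (t + 1) else σ (t + 1)

theorem EvictStep.victim_eq (h : EvictStep R (t + 1)) : R.victim t = R.p (t + 1) :=
  if_pos h

theorem CacheRun.victim_eq_of_not_evictStep (h : ¬EvictStep R (t + 1)) :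
    R.victim t = σ (t + 1) :=
  if_neg h

theorem CacheRun.victim_eq_of_mem (h : σ (t + 1) ∈ R.C t) : R.victim t = σ (t + 1) :=
  R.victim_eq_of_not_evictStep fun hev => (evictStep_succ_iff.1 hev).2.1 h

theorem CacheRun.victim_eq_of_card_lt (h : (R.C t).card < k) : R.victim t = σ (t + 1) :=
  R.victim_eq_of_not_evictStep fun hev => h.ne (evictStep_succ_iff.1 hev).2.2

theorem EvictStep.victim_mem (h : EvictStep R (t + 1)) : R.victim t ∈ R.C t :=
  h.victim_eq ▸ R.evict_mem (t + 1) h.1 h.2.1 h.2.2.1 h.2.2.2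

theorem CacheRun.victim_mem_of_card_eq (ht : t < T) (h : (R.C t).card = k) :
    R.victim t ∈ R.C t := by
  by_cases hmem : σ (t + 1) ∈ R.C t
  · rwa [R.victim_eq_of_mem hmem]
  · exact (evictStep_succ_iff.2 ⟨ht, hmem, h⟩).victim_mem

theorem CacheRun.C_succ (R : CacheRun S k T σ) (ht : t < T) :
    R.C (t + 1) = insert (σ (t + 1)) ((R.C t).erase (R.victim t)) := by
  by_cases hev : EvictStep R (t + 1)
  · rw [hev.victim_eq]
    exact R.evict (t + 1) hev.1 hev.2.1 hev.2.2.1 hev.2.2.2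
  · rw [R.victim_eq_of_not_evictStep hev]
    have hlt : σ (t + 1) ∉ R.C t → (R.C t).card < k := fun hmem =>
      (R.card_le t).lt_of_ne fun hcard => hev (evictStep_succ_iff.2 ⟨ht, hmem, hcard⟩)
    rw [R.hit (t + 1) (by lia) ht (or_iff_not_imp_left.2 hlt)]
    ext
    grind

theorem EvictStep.victim_notMem_succ (h : EvictStep R (t + 1)) : R.victim t ∉ R.C (t + 1) := by
  have hne : R.victim t ≠ σ (t + 1) := fun heq => (evictStep_succ_iff.1 h).2.1 (heq ▸ h.victim_mem)
  simp [R.C_succ h.2.1, hne]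

theorem CacheRun.card_C_le_succ (R : CacheRun S k T σ) (ht : t < T) :
    (R.C t).card ≤ (R.C (t + 1)).card := by
  rw [R.C_succ ht]
  by_cases hv : R.victim t ∈ R.C t
  · have hreq : σ (t + 1) ∉ (R.C t).erase (R.victim t) := by
      have := R.victim_eq_of_mem (t := t)
      grind
    rw [Finset.card_insert_of_notMem hreq, Finset.card_erase_add_one hv]
  · rw [Finset.erase_eq_of_notMem hv]
    exact Finset.card_le_card (Finset.subset_insert _ _)

theorem CacheRun.card_C_eq_of_le (htu : t ≤ u) (hu : u ≤ T) (h : (R.C t).card = k) :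
    (R.C u).card = k := by
  induction u, htu using Nat.le_induction with
  | base => exact h
  | succ u _ ih =>
    exact (R.card_le _).antisymm ((ih (by lia)).symm.trans_le (R.card_C_le_succ hu))

theorem CacheRun.notMem_of_le (htu : t ≤ u) (hu : u ≤ T) (h : p ∉ R.C t)
    (hreq : ∀ s ∈ Finset.Icc (t + 1) u, σ s ≠ p) : p ∉ R.C u := by
  induction u, htu using Nat.le_induction with
  | base => exact h
  | succ u htu ih =>
    have hp := ih (by lia) fun s hs => hreq s (Finset.Icc_subset_Icc_right u.le_succ hs)
    have hne := hreq (u + 1) (by simp [htu])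
    rw [R.C_succ hu]
    grind

theorem CacheRun.C_eq_of_card_lt (R A : CacheRun S k T σ) (ht : t ≤ T) (h : (R.C t).card < k) :
    R.C t = A.C t := by
  induction t with
  | zero => rw [R.init, A.init]
  | succ t ih =>
    have hR : (R.C t).card < k := (R.card_C_le_succ ht).trans_lt h
    have heq := ih (by lia) hR
    rw [R.C_succ ht, A.C_succ ht, R.victim_eq_of_card_lt hR, A.victim_eq_of_card_lt (heq ▸ hR), heq]

theorem CacheRun.victim_mem_iff (R A : CacheRun S k T σ) (ht : t < T) :
    R.victim t ∈ R.C t ↔ A.victim t ∈ A.C t := by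
  rcases (R.card_le t).lt_or_eq with hR | hR
  · have heq := C_eq_of_card_lt R A ht.le hR
    rw [R.victim_eq_of_card_lt hR, A.victim_eq_of_card_lt (heq ▸ hR), heq]
  · have hA : (A.C t).card = k := (A.card_le t).eq_of_not_lt fun hA =>
      hA.ne (C_eq_of_card_lt A R ht.le hA ▸ hR)
    exact iff_of_true (R.victim_mem_of_card_eq ht hR) (A.victim_mem_of_card_eq ht hA)

theorem CacheRun.exists_request_of_mem (ht : t ≤ T) (hp : p ∈ R.C t) :
    ∃ i ∈ Finset.Icc 1 t, σ i = p := by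
  by_contra! h
  exact R.notMem_of_le t.zero_le ht (by simp [R.init]) h hp

theorem mem_lastIdx : i ∈ lastIdx R t ↔
    i ∈ Finset.Icc 1 t ∧ σ i ∈ R.C t ∧ ∀ j ∈ Finset.Icc (i + 1) t, σ j ≠ σ i := by
  simp only [lastIdx, Finset.mem_filter]

theorem lastReq_mem_lastIdx (ht : t ≤ T) (hp : p ∈ R.C t) :
    lastReq σ t p ∈ lastIdx R t ∧ σ (lastReq σ t p) = p := by
  obtain ⟨i, hi, hip⟩ := R.exists_request_of_mem ht hp
  obtain ⟨hi1, hit⟩ := Finset.mem_Icc.1 hi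
  have hspec : σ (lastReq σ t p) = p := Nat.findGreatest_spec (P := fun i => σ i = p) hit hip
  have hlast : ∀ j ∈ Finset.Icc (lastReq σ t p + 1) t, σ j ≠ p := fun j hj =>
    Nat.findGreatest_is_greatest (Finset.mem_Icc.1 hj).1 (Finset.mem_Icc.1 hj).2
  have hle : i ≤ lastReq σ t p := Nat.le_findGreatest hit hip
  simp only [mem_lastIdx, Finset.mem_Icc, hspec]
  exact ⟨⟨⟨hi1.trans hle, Nat.findGreatest_le t⟩, hp, by simpa using hlast⟩, trivial⟩

theorem nextReq_eq_nextUse_of_mem_lastIdx (ht : t ≤ T) (hi : i ∈ lastIdx R t) :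
    nextReq σ T i = nextUse σ T t (σ i) := by
  obtain ⟨hit, -, hlast⟩ := mem_lastIdx.1 hi
  exact nextReq_eq_nextUse (Finset.mem_Icc.1 hit).2 ht hlast

theorem nextReq_lastReq (ht : t ≤ T) (hp : p ∈ R.C t) :
    nextReq σ T (lastReq σ t p) = nextUse σ T t p := by
  obtain ⟨hmem, hreq⟩ := lastReq_mem_lastIdx ht hp
  rw [nextReq_eq_nextUse_of_mem_lastIdx ht hmem, hreq]

theorem EvictStep.evictsIdx (h : EvictStep R (t + 1)) :
    EvictsIdx R (t + 1) (lastReq σ t (R.victim t)) := by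
  obtain ⟨hmem, hreq⟩ := lastReq_mem_lastIdx (Nat.le_of_succ_le h.2.1) h.victim_mem
  exact ⟨h, hmem, by rw [hreq, h.victim_eq]⟩

theorem EvictsIdx.le_of_evictsIdx (h : EvictsIdx R t i) (h' : EvictsIdx R u i) : u ≤ t := by
  by_contra! htu
  obtain ⟨hev, hi, hpi⟩ := h
  obtain ⟨s, rfl⟩ := Nat.exists_eq_add_of_le' hev.1
  obtain ⟨hit, -, -⟩ := mem_lastIdx.1 hi
  obtain ⟨-, hmem, hlast⟩ := mem_lastIdx.1 h'.2.1
  have hgone := hev.victim_notMem_succ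
  rw [hev.victim_eq, hpi] at hgone
  refine R.notMem_of_le (Nat.le_sub_one_of_lt htu) ((Nat.sub_le _ _).trans h'.1.2.1) hgone
    (fun j hj => hlast j ?_) hmem
  simp only [Finset.mem_Icc] at hit hj ⊢
  lia

theorem EvictsIdx.unique (h : EvictsIdx R t i) (h' : EvictsIdx R u i) : t = u :=
  (h'.le_of_evictsIdx h).antisymm (h.le_of_evictsIdx h')

theorem EvictsIdx.triggers (h : EvictsIdx R (t + 1) i) (hT : nextReq σ T i ≤ T) :
    Triggers R (t + 1) (nextReq σ T i) := by
  obtain ⟨hev, hi, hpi⟩ := h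
  obtain ⟨ht, hmiss, hcard⟩ := evictStep_succ_iff.1 hev
  have hnext := nextReq_eq_nextUse_of_mem_lastIdx ht.le hi
  obtain ⟨hlt, hreq⟩ := nextUse_mem σ T t (σ i)
  rw [← hnext] at hlt hreq
  have hne : nextReq σ T i ≠ t + 1 := fun heq =>
    hmiss (heq ▸ hreq hT ▸ (mem_lastIdx.1 hi).2.1)
  obtain ⟨n, hn⟩ := Nat.exists_eq_add_of_le' (Nat.one_le_of_lt hlt)
  rw [hn] at hT hlt hreq hne
  have hgone : σ i ∉ R.C (t + 1) := hpi ▸ hev.victim_eq ▸ hev.victim_notMem_succ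
  have hidle : ∀ s ∈ Finset.Icc (t + 1 + 1) n, σ s ≠ σ i := fun s hs heq => by
    have := nextUse_le (σ := σ) (T := T) (p := σ i) (t := t) (u := s)
    grind
  have hmiss' : σ (n + 1) ∉ R.C n :=
    hreq hT ▸ R.notMem_of_le (by lia) (by lia) hgone hidle
  have hev' : EvictStep R (n + 1) :=
    evictStep_succ_iff.2 ⟨hT, hmiss', R.card_C_eq_of_le (by lia) (by lia) hcard⟩
  exact ⟨i, ⟨hev, hi, hpi⟩, rfl, hn ▸ ⟨_, hev'.evictsIdx⟩⟩

/-- The number of cache misses among the first `t` requests. -/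
noncomputable def missCount (R : CacheRun S k T σ) (t : ℕ) : ℕ :=
  ((Finset.Icc 1 t).filter fun t => σ t ∉ R.C (t - 1)).card

theorem missCount_succ (R : CacheRun S k T σ) (t : ℕ) :
    missCount R (t + 1) = missCount R t + if σ (t + 1) ∈ R.C t then 0 else 1 := by
  rw [missCount, missCount, ← Finset.insert_Icc_right_eq_Icc_add_one (by lia),
    Finset.filter_insert]
  split_ifs <;> simp_all

theorem missCount_mono (R : CacheRun S k T σ) : Monotone (missCount R) :=
  monotone_nat_of_le_succ fun t => (missCount_succ R t).symm ▸ Nat.le_add_right _ _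

end Run

section Matching

variable {k T : ℕ} {σ : ℕ → S} {R A : CacheRun S k T σ} {s t : ℕ} {p : S}

/-- The matching between the caches of `R` and `A` after `t` requests. -/
noncomputable def matching (R A : CacheRun S k T σ) : ℕ → Equiv.Perm S
  | 0 => 1
  | t + 1 => rematch (matching R A t) (σ (t + 1)) (R.victim t) (A.victim t)

/-- The page matched to `A.victim t`, which has to find a new partner when `A.victim t` leaves. -/
noncomputable def counterpart (R A : CacheRun S k T σ) (t : ℕ) : S :=
  (matching R A t).symm (A.victim t)

theorem matching_counterpart (R A : CacheRun S k T σ) (t : ℕ) :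
    matching R A t (counterpart R A t) = A.victim t :=
  Equiv.apply_symm_apply _ _

theorem isMatching_matching (R A : CacheRun S k T σ) (ht : t ≤ T) :
    IsMatching (matching R A t) (R.C t) (A.C t) := by
  induction t with
  | zero => constructor <;> simp [R.init, A.init]
  | succ t ih =>
    rw [R.C_succ ht, A.C_succ ht]
    exact (ih (by lia)).rematch (R.victim_mem_iff A ht) R.victim_eq_of_mem A.victim_eq_of_mem

theorem matching_succ_apply (ht : t < T) (hp : p ∈ (R.C t).erase (R.victim t)) :
    matching R A (t + 1) p =
      if p = counterpart R A t then matching R A t (R.victim t) else matching R A t p :=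
  (isMatching_matching R A ht.le).rematch_apply (R.victim_mem_iff A ht) R.victim_eq_of_mem
    A.victim_eq_of_mem hp

theorem matching_succ_request (R A : CacheRun S k T σ) (t : ℕ) :
    matching R A (t + 1) (σ (t + 1)) = σ (t + 1) :=
  rematch_apply_self

theorem CacheRun.ne_request_of_mem_erase_victim (hp : p ∈ (R.C t).erase (R.victim t)) :
    p ≠ σ (t + 1) := by
  rintro rfl
  obtain ⟨hne, hmem⟩ := Finset.mem_erase.1 hp
  exact hne (R.victim_eq_of_mem hmem).symm

theorem nextUse_matching_succ (ht : t < T) (hp : p ∈ (R.C t).erase (R.victim t)) :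
    nextUse σ T (t + 1) (matching R A (t + 1) p) = nextUse σ T t
      (if p = counterpart R A t then matching R A t (R.victim t) else matching R A t p) := by
  rw [← matching_succ_apply ht hp]
  refine nextUse_succ_of_ne ht fun heq => R.ne_request_of_mem_erase_victim hp ?_
  exact (matching R A (t + 1)).injective (heq.trans (matching_succ_request R A t).symm)

theorem counterpart_mem_iff (ht : t < T) : counterpart R A t ∈ R.C t ↔ R.victim t ∈ R.C t := by
  rw [← (isMatching_matching R A ht.le).apply_mem_iff, matching_counterpart, R.victim_mem_iff A ht]

theorem counterpart_eq_of_mem (ht : t < T) (hR : σ (t + 1) ∈ R.C t) (hA : σ (t + 1) ∈ A.C t) :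
    counterpart R A t = σ (t + 1) := by
  rw [counterpart, A.victim_eq_of_mem hA, Equiv.symm_apply_eq,
    (isMatching_matching R A ht.le).apply_eq_self _ hR hA]

/-- The pages of `R`'s cache whose partner in `A`'s cache is requested earlier. -/
noncomputable def invertedPages (R A : CacheRun S k T σ) (t : ℕ) : Finset S :=
  (R.C t).filter fun p => nextUse σ T t (matching R A t p) < nextUse σ T t p

theorem mem_invertedPages : p ∈ invertedPages R A t ↔
    p ∈ R.C t ∧ nextUse σ T t (matching R A t p) < nextUse σ T t p :=
  Finset.mem_filter

theorem mem_invertedPages_succ (ht : t < T) : p ∈ invertedPages R A (t + 1) ↔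
    p ∈ (R.C t).erase (R.victim t) ∧ nextUse σ T t
      (if p = counterpart R A t then matching R A t (R.victim t) else matching R A t p) <
        nextUse σ T t p := by
  rw [mem_invertedPages, R.C_succ ht, Finset.mem_insert]
  by_cases hp : p ∈ (R.C t).erase (R.victim t)
  · rw [nextUse_matching_succ ht hp, nextUse_succ_of_ne ht (R.ne_request_of_mem_erase_victim hp)]
    simp [hp]
  · simp only [hp, or_false, false_and, iff_false, not_and, not_lt]
    rintro rfl
    rw [matching_succ_request]

/-- The eviction at time `t + 1` becomes an edge of the eviction graph: `R` evicts a page `y` that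
is requested no later than its partner `z`, and `z` is rematched to a page requested after it. -/
def IsChargedStep (R A : CacheRun S k T σ) (t : ℕ) : Prop :=
  EvictStep R (t + 1) ∧
    nextUse σ T t (R.victim t) ≤ nextUse σ T t (matching R A t (R.victim t)) ∧
    nextUse σ T t (matching R A t (R.victim t)) < nextUse σ T t (counterpart R A t)

/-- The charged steps among the first `t` requests, which index the edges of the eviction graph. -/
noncomputable def chargedSteps (R A : CacheRun S k T σ) (t : ℕ) : Finset ℕ :=
  (Finset.range t).filter (IsChargedStep R A)

theorem mem_chargedSteps : s ∈ chargedSteps R A t ↔ s < t ∧ IsChargedStep R A s := by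
  simp [chargedSteps]

theorem card_chargedSteps_succ (R A : CacheRun S k T σ) (t : ℕ) :
    (chargedSteps R A (t + 1)).card =
      (chargedSteps R A t).card + if IsChargedStep R A t then 1 else 0 := by
  rw [chargedSteps, Finset.range_add_one, Finset.filter_insert]
  split_ifs <;> simp [chargedSteps]

theorem invertedPages_succ_subset (ht : t < T) : invertedPages R A (t + 1) ⊆
    insert (counterpart R A t) ((invertedPages R A t).erase (R.victim t)) := by
  intro p hp
  obtain ⟨hpR, hlt⟩ := (mem_invertedPages_succ ht).1 hp
  by_cases hpb : p = counterpart R A t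
  · exact hpb ▸ Finset.mem_insert_self _ _
  · obtain ⟨hpy, hpR⟩ := Finset.mem_erase.1 hpR
    exact Finset.mem_insert_of_mem
      (Finset.mem_erase.2 ⟨hpy, mem_invertedPages.2 ⟨hpR, by rwa [if_neg hpb] at hlt⟩⟩)

theorem invertedPages_succ_subset_of_notMem (ht : t < T)
    (h : counterpart R A t ∉ invertedPages R A (t + 1)) :
    invertedPages R A (t + 1) ⊆ (invertedPages R A t).erase (counterpart R A t) := by
  have := invertedPages_succ_subset (R := R) (A := A) ht
  grind

-- If the rematched pair is inverted, then the evicted page was inverted or the step is charged.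
theorem EvictStep.card_invertedPages_succ_le (h : EvictStep R (t + 1)) :
    (invertedPages R A (t + 1)).card ≤
      ((invertedPages R A t).erase (counterpart R A t)).card +
        if IsChargedStep R A t then 1 else 0 := by
  have ht : t < T := h.2.1
  by_cases hb : counterpart R A t ∈ invertedPages R A (t + 1)
  · obtain ⟨hbR, hlt⟩ := (mem_invertedPages_succ ht).1 hb
    rw [if_pos rfl] at hlt
    have hsub : invertedPages R A (t + 1) ⊆ insert (counterpart R A t)
        (((invertedPages R A t).erase (counterpart R A t)).erase (R.victim t)) := by
      have := invertedPages_succ_subset (R := R) (A := A) ht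
      grind
    have hcard := (Finset.card_le_card hsub).trans (Finset.card_insert_le _ _)
    by_cases hy : R.victim t ∈ (invertedPages R A t).erase (counterpart R A t)
    · rw [Finset.card_erase_add_one hy] at hcard
      exact hcard.trans (Nat.le_add_right _ _)
    · have hle : nextUse σ T t (R.victim t) ≤ nextUse σ T t (matching R A t (R.victim t)) := by
        by_contra! hinv
        exact hy (Finset.mem_erase.2 ⟨(Finset.ne_of_mem_erase hbR).symm,
          mem_invertedPages.2 ⟨h.victim_mem, hinv⟩⟩)
      have hcharged : IsChargedStep R A t := ⟨h, hle, hlt⟩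
      rw [if_pos hcharged]
      rwa [Finset.erase_eq_of_notMem hy] at hcard
  · exact (Finset.card_le_card (invertedPages_succ_subset_of_notMem ht hb)).trans
      (Nat.le_add_right _ _)

theorem EvictStep.counterpart_mem_invertedPages (h : EvictStep R (t + 1))
    (hA : σ (t + 1) ∈ A.C t) : counterpart R A t ∈ invertedPages R A t := by
  obtain ⟨ht, hR, -⟩ := evictStep_succ_iff.1 h
  have hb : counterpart R A t ∈ R.C t := (counterpart_mem_iff ht).2 h.victim_mem
  rw [mem_invertedPages, matching_counterpart, A.victim_eq_of_mem hA, nextUse_request_succ]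
  exact ⟨hb, succ_lt_nextUse_of_ne ht fun heq => hR (heq ▸ hb)⟩

theorem invertedPages_succ_subset_of_not_evictStep (ht : t < T) (h : ¬EvictStep R (t + 1))
    (hA : σ (t + 1) ∈ R.C t → σ (t + 1) ∈ A.C t) :
    invertedPages R A (t + 1) ⊆ invertedPages R A t := by
  have hb : counterpart R A t ∉ (R.C t).erase (R.victim t) := by
    rw [R.victim_eq_of_not_evictStep h]
    by_cases hR : σ (t + 1) ∈ R.C t
    · simp [counterpart_eq_of_mem ht hR (hA hR)]
    · have := counterpart_mem_iff (R := R) (A := A) ht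
      rw [R.victim_eq_of_not_evictStep h] at this
      exact fun hmem => hR (this.1 (Finset.mem_of_mem_erase hmem))
  exact (invertedPages_succ_subset_of_notMem ht fun hmem =>
    hb ((mem_invertedPages_succ ht).1 hmem).1).trans (Finset.erase_subset _ _)

theorem CacheRun.notMem_of_not_evictStep (R A : CacheRun S k T σ) (ht : t < T)
    (h : ¬EvictStep R (t + 1)) (hR : σ (t + 1) ∉ R.C t) : σ (t + 1) ∉ A.C t := by
  have hlt : (R.C t).card < k :=
    (R.card_le t).lt_of_ne fun hcard => h (evictStep_succ_iff.2 ⟨ht, hR, hcard⟩)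
  rwa [← R.C_eq_of_card_lt A ht.le hlt]

theorem miss_add_card_invertedPages_succ_le (ht : t < T) :
    (if σ (t + 1) ∈ R.C t then 0 else 1) + (invertedPages R A (t + 1)).card ≤
      (invertedPages R A t).card + (if σ (t + 1) ∈ A.C t then 0 else 1) +
        if IsChargedStep R A t then 1 else 0 := by
  by_cases hev : EvictStep R (t + 1)
  · have hle := hev.card_invertedPages_succ_le (A := A)
    rw [if_neg (evictStep_succ_iff.1 hev).2.1]
    by_cases hA : σ (t + 1) ∈ A.C t
    · have := Finset.card_erase_add_one (hev.counterpart_mem_invertedPages hA)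
      rw [if_pos hA]
      lia
    · have := (invertedPages R A t).card_erase_le (a := counterpart R A t)
      rw [if_neg hA]
      lia
  · by_cases hhit : σ (t + 1) ∈ R.C t → σ (t + 1) ∈ A.C t
    · have hle := Finset.card_le_card (invertedPages_succ_subset_of_not_evictStep ht hev hhit)
      have hmiss := R.notMem_of_not_evictStep A ht hev
      grind
    · obtain ⟨hR, hA⟩ := Classical.not_imp.1 hhit
      have hle := (Finset.card_le_card (invertedPages_succ_subset (R := R) (A := A) ht)).trans
        (Finset.card_insert_le _ _)
      have := (invertedPages R A t).card_erase_le (a := R.victim t)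
      rw [if_pos hR, if_neg hA]
      lia

theorem missCount_add_card_invertedPages_le (R A : CacheRun S k T σ) (ht : t ≤ T) :
    missCount R t + (invertedPages R A t).card ≤ missCount A t + (chargedSteps R A t).card := by
  induction t with
  | zero => simp [missCount, invertedPages, R.init]
  | succ t ih =>
    have hstep := miss_add_card_invertedPages_succ_le (R := R) (A := A) ht
    have := ih (by lia)
    rw [missCount_succ, missCount_succ, card_chargedSteps_succ]
    lia

end Matching

section Coloring

variable {k T : ℕ} {σ : ℕ → S} {R A : CacheRun S k T σ} {s t : ℕ} {p : S}

theorem mem_sdiff_of_mem_sdiff_succ (ht : t < T) (hp : p ∈ R.C (t + 1) \ A.C (t + 1))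
    (hnew : ¬(σ (t + 1) ∉ A.C t ∧ p = counterpart R A t)) : p ∈ R.C t \ A.C t := by
  have hfix := (isMatching_matching R A ht.le).apply_eq_self p
  have hb : matching R A t p = A.victim t → p = counterpart R A t :=
    fun h => (Equiv.eq_symm_apply _).2 h
  have hvictim := A.victim_eq_of_mem (t := t)
  rw [R.C_succ ht, A.C_succ ht] at hp
  grind

theorem mem_erase_victim_of_mem_sdiff_succ (ht : t < T) (hp : p ∈ R.C (t + 1) \ A.C (t + 1)) :
    p ∈ (R.C t).erase (R.victim t) := by
  rw [R.C_succ ht, A.C_succ ht] at hp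
  grind

/-- A color for each page cached by `R` but not by `A`: the number of misses of `A` before the one
at which the page became such.  At that miss the page was matched to the page evicted by `A`. -/
noncomputable def color (R A : CacheRun S k T σ) : ℕ → S → ℕ
  | 0, _ => 0
  | t + 1, p =>
    if σ (t + 1) ∉ A.C t ∧ p = counterpart R A t then missCount A t else color R A t p

theorem color_lt_missCount (ht : t ≤ T) (hp : p ∈ R.C t \ A.C t) :
    color R A t p < missCount A t := by
  induction t with
  | zero => simp [R.init] at hp
  | succ t ih =>
    rw [color, missCount_succ]
    split_ifs with hnew hA
    · exact absurd hA hnew.1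
    · exact Nat.lt_succ_self _
    all_goals
      exact (ih (by lia) (mem_sdiff_of_mem_sdiff_succ ht hp hnew)).trans_le (Nat.le_add_right _ _)

theorem color_injOn (ht : t ≤ T) : Set.InjOn (color R A t) (R.C t \ A.C t : Finset S) := by
  induction t with
  | zero => simp [R.init]
  | succ t ih =>
    intro p hp q hq h
    have hlt {r} (hr : r ∈ R.C (t + 1) \ A.C (t + 1))
        (hnew : ¬(σ (t + 1) ∉ A.C t ∧ r = counterpart R A t)) :
        color R A t r < missCount A t :=
      color_lt_missCount (by lia) (mem_sdiff_of_mem_sdiff_succ ht hr hnew)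
    rw [color, color] at h
    split_ifs at h with hpnew hqnew hqnew
    · exact hpnew.2.trans hqnew.2.symm
    · exact absurd h (hlt hq hqnew).ne'
    · exact absurd h (hlt hp hpnew).ne
    · exact ih (by lia) (mem_sdiff_of_mem_sdiff_succ ht hp hpnew)
        (mem_sdiff_of_mem_sdiff_succ ht hq hqnew) h

/-- The color of the edge created at step `s`, namely that of its source page after the step. -/
noncomputable def edgeColor (R A : CacheRun S k T σ) (s : ℕ) : ℕ :=
  color R A (s + 1) (counterpart R A s)

theorem IsChargedStep.counterpart_mem_sdiff_succ (h : IsChargedStep R A s) :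
    counterpart R A s ∈ R.C (s + 1) \ A.C (s + 1) := by
  obtain ⟨hev, hle, hlt⟩ := h
  obtain ⟨hs, hmiss, -⟩ := evictStep_succ_iff.1 hev
  have hbR : counterpart R A s ∈ R.C s := (counterpart_mem_iff hs).2 hev.victim_mem
  have hne : counterpart R A s ≠ R.victim s := fun heq => (hle.trans_lt hlt).ne (heq ▸ rfl)
  have hbA : counterpart R A s ∈ A.C s → counterpart R A s = A.victim s := fun hmem =>
    ((isMatching_matching R A hs.le).apply_eq_self _ hbR hmem).symm.trans
      (matching_counterpart R A s)
  rw [R.C_succ hs, A.C_succ hs]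
  grind

theorem IsChargedStep.edgeColor_lt_missCount (h : IsChargedStep R A s) :
    edgeColor R A s < missCount A (s + 1) :=
  color_lt_missCount h.1.2.1 h.counterpart_mem_sdiff_succ

theorem nextUse_matching_le_succ (ht : t < T) (hp : p ∈ R.C (t + 1) \ A.C (t + 1))
    (hnew : ¬(σ (t + 1) ∉ A.C t ∧ p = counterpart R A t)) :
    nextUse σ T t (matching R A t p) ≤ nextUse σ T (t + 1) (matching R A (t + 1) p) := by
  have hpR := mem_erase_victim_of_mem_sdiff_succ ht hp
  by_cases hpb : p = counterpart R A t
  · have hA : σ (t + 1) ∈ A.C t := by_contra fun hA => hnew ⟨hA, hpb⟩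
    rw [hpb, matching_counterpart, A.victim_eq_of_mem hA, nextUse_request_succ]
    exact (lt_nextUse σ T (t + 1) _).le
  · rw [nextUse_matching_succ ht hpR, if_neg hpb]

-- While a page keeps its color it is not requested, and the next use of its partner only grows.
theorem IsChargedStep.lastReq_eq_and_nextUse_le (h : IsChargedStep R A s) (hst : s < t)
    (ht : t ≤ T) (hp : p ∈ R.C t \ A.C t) (hcolor : edgeColor R A s = color R A t p) :
    lastReq σ s (counterpart R A s) = lastReq σ t p ∧
      nextUse σ T s (R.victim s) ≤ nextUse σ T t (matching R A t p) := by
  induction t, hst using Nat.le_induction with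
  | base =>
    obtain rfl : counterpart R A s = p := color_injOn ht h.counterpart_mem_sdiff_succ hp hcolor
    have hpR := mem_erase_victim_of_mem_sdiff_succ ht hp
    rw [lastReq_succ_of_ne (R.ne_request_of_mem_erase_victim hpR),
      nextUse_matching_succ ht hpR, if_pos rfl]
    exact ⟨rfl, h.2.1⟩
  | succ t hst ih =>
    have hlt := h.edgeColor_lt_missCount.trans_le (missCount_mono A hst)
    rw [color] at hcolor
    split_ifs at hcolor with hnew
    · exact absurd hcolor hlt.ne
    · have hpR := mem_erase_victim_of_mem_sdiff_succ ht hp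
      obtain ⟨hlast, hnext⟩ := ih (by lia) (mem_sdiff_of_mem_sdiff_succ ht hp hnew) hcolor
      rw [lastReq_succ_of_ne (R.ne_request_of_mem_erase_victim hpR)]
      exact ⟨hlast, hnext.trans (nextUse_matching_le_succ ht hp hnew)⟩

theorem IsChargedStep.lastReq_eq_and_nextUse_le_succ (h : IsChargedStep R A s)
    (h' : IsChargedStep R A t) (hst : s < t) (hcolor : edgeColor R A s = edgeColor R A t) :
    lastReq σ s (counterpart R A s) = lastReq σ t (counterpart R A t) ∧
      nextUse σ T s (R.victim s) ≤ t + 1 := by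
  have ht : t < T := h'.1.2.1
  have hlt := h.edgeColor_lt_missCount.trans_le (missCount_mono A hst)
  rw [edgeColor.eq_def R A t, color] at hcolor
  split_ifs at hcolor with hnew
  · exact absurd hcolor hlt.ne
  · have hA : σ (t + 1) ∈ A.C t := by_contra fun hA => hnew ⟨hA, rfl⟩
    have hb := mem_sdiff_of_mem_sdiff_succ ht h'.counterpart_mem_sdiff_succ hnew
    have key := h.lastReq_eq_and_nextUse_le hst ht.le hb hcolor
    rwa [matching_counterpart, A.victim_eq_of_mem hA, nextUse_request_succ] at key

end Coloring

section Graph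

variable {k T : ℕ} {σ : ℕ → S} {R A : CacheRun S k T σ} {s t : ℕ}

/-- The edge of the eviction graph created at step `s`, from the counterpart of `A.victim s` to the
page evicted by `R`; a page is represented by the time of its last request. -/
noncomputable def edge (R A : CacheRun S k T σ) (s : ℕ) : ℕ × ℕ :=
  (lastReq σ s (counterpart R A s), lastReq σ s (R.victim s))

theorem injOn_edge (R A : CacheRun S k T σ) : Set.InjOn (edge R A) (chargedSteps R A T) := by
  intro s hs t ht h
  have hsev := (mem_chargedSteps.1 hs).2.1.evictsIdx
  have htev := (mem_chargedSteps.1 ht).2.1.evictsIdx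
  have htarget : lastReq σ s (R.victim s) = lastReq σ t (R.victim t) := congrArg Prod.snd h
  exact Nat.succ_injective (hsev.unique (htarget ▸ htev))

/-- The step at which an edge of the eviction graph was created. -/
noncomputable def edgeStep (R A : CacheRun S k T σ) (e : ℕ × ℕ) : ℕ :=
  Function.invFunOn (edge R A) (chargedSteps R A T) e

theorem edgeStep_edge (hs : s ∈ chargedSteps R A T) : edgeStep R A (edge R A s) = s :=
  (injOn_edge R A).leftInvOn_invFunOn hs

theorem IsChargedStep.mistake (h : IsChargedStep R A s) :
    EvictsIdx R (s + 1) (edge R A s).2 ∧ (edge R A s).1 ∈ lastIdx R s ∧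
      nextReq σ T (edge R A s).2 < nextReq σ T (edge R A s).1 := by
  obtain ⟨hev, hle, hlt⟩ := h
  have hs : s < T := hev.2.1
  have hb : counterpart R A s ∈ R.C s := (counterpart_mem_iff hs).2 hev.victim_mem
  rw [edge, nextReq_lastReq hs.le hb, nextReq_lastReq hs.le hev.victim_mem]
  exact ⟨hev.evictsIdx, (lastReq_mem_lastIdx hs.le hb).1, hle.trans_lt hlt⟩

/-- The eviction graph whose edges are created at the charged steps. -/
noncomputable def evictionGraph (R A : CacheRun S k T σ) : EvictionGraph R where
  E := (chargedSteps R A T).image (edge R A)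
  time e := edgeStep R A e + 1
  time_inj := by
    simp only [Finset.forall_mem_image]
    intro s hs t ht h
    rw [edgeStep_edge hs, edgeStep_edge ht] at h
    rw [Nat.succ_injective h]
  mistake := by
    simp only [Finset.forall_mem_image]
    intro s hs
    rw [edgeStep_edge hs]
    exact (mem_chargedSteps.1 hs).2.mistake

theorem card_evictionGraph_E (R A : CacheRun S k T σ) :
    (evictionGraph R A).E.card = (chargedSteps R A T).card :=
  Finset.card_image_of_injOn (injOn_edge R A)

theorem IsChargedStep.exists_triggers (h : IsChargedStep R A s) (h' : IsChargedStep R A t)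
    (hst : s < t) (hcolor : edgeColor R A s = edgeColor R A t) :
    ∃ t', t' ≤ t + 1 ∧ Triggers R (s + 1) t' := by
  have hle := (h.lastReq_eq_and_nextUse_le_succ h' hst hcolor).2
  rw [← nextReq_lastReq (Nat.le_of_succ_le h.1.2.1) h.1.victim_mem] at hle
  exact ⟨_, hle, h.1.evictsIdx.triggers (hle.trans h'.1.2.1)⟩

theorem IsChargedStep.edge_fst_eq (h : IsChargedStep R A s) (h' : IsChargedStep R A t)
    (hcolor : edgeColor R A s = edgeColor R A t) : (edge R A s).1 = (edge R A t).1 := by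
  rcases lt_trichotomy s t with hst | rfl | hts
  · exact (h.lastReq_eq_and_nextUse_le_succ h' hst hcolor).1
  · rfl
  · exact (h'.lastReq_eq_and_nextUse_le_succ h hts hcolor.symm).1.symm

end Graph

theorem stmt6_general {k T : ℕ} {σ : ℕ → S} (R A : CacheRun S k T σ) :
    ∃ (H : EvictionGraph R) (col : ℕ × ℕ → ℕ) (n : ℕ),
      (∀ e ∈ H.E, col e < n) ∧
      (∀ e ∈ H.E, ∀ e' ∈ H.E, col e = col e' → e.1 = e'.1) ∧
      (∀ e ∈ H.E, ∀ e' ∈ H.E, col e = col e' → H.time e < H.time e' →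
        ∃ t', t' ≤ H.time e' ∧ Triggers R (H.time e) t') ∧
      n ≤ misses A ∧
      misses R ≤ misses A + H.E.card := by
  refine ⟨evictionGraph R A, fun e => edgeColor R A (edgeStep R A e), misses A, ?_, ?_, ?_,
    le_rfl, ?_⟩
  · simp only [evictionGraph, Finset.forall_mem_image]
    intro s hs
    obtain ⟨hsT, hcharged⟩ := mem_chargedSteps.1 hs
    rw [edgeStep_edge hs]
    exact hcharged.edgeColor_lt_missCount.trans_le (missCount_mono A hsT)
  · simp only [evictionGraph, Finset.forall_mem_image]
    intro s hs t ht hcolor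
    rw [edgeStep_edge hs, edgeStep_edge ht] at hcolor
    exact (mem_chargedSteps.1 hs).2.edge_fst_eq (mem_chargedSteps.1 ht).2 hcolor
  · simp only [evictionGraph, Finset.forall_mem_image]
    intro s hs t ht
    rw [edgeStep_edge hs, edgeStep_edge ht]
    intro hcolor hst
    exact (mem_chargedSteps.1 hs).2.exists_triggers (mem_chargedSteps.1 ht).2
      (Nat.lt_of_succ_lt_succ hst) hcolor
  · rw [card_evictionGraph_E]
    exact (Nat.le_add_right _ _).trans (missCount_add_card_invertedPages_le R A le_rfl)

/-- For any run of a feasible eviction strategy there is an eviction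
graph with an edge coloring such that same-colored edges share their source, the
evictions at same-colored edges do not overlap, at most `OPT` colors are used, and
`OBJ_Q ≤ OPT + |E|`. -/
theorem stmt6 {S : Type} [DecidableEq S] (k T : ℕ) (hk : 1 ≤ k) (σ : ℕ → S)
    (R A : CacheRun S k T σ) (hA : IsBelady A) :
    ∃ (H : EvictionGraph R) (col : ℕ × ℕ → ℕ) (n : ℕ),
      (∀ e ∈ H.E, col e < n) ∧
      (∀ e ∈ H.E, ∀ e' ∈ H.E, col e = col e' → e.1 = e'.1) ∧
      (∀ e ∈ H.E, ∀ e' ∈ H.E, col e = col e' → H.time e < H.time e' →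
        ∃ t', t' ≤ H.time e' ∧ Triggers R (H.time e) t') ∧
      n ≤ misses A ∧
      misses R ≤ misses A + H.E.card :=
  stmt6_general R A

end Caching
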